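/- arXiv:math/0406430 — 2 statements merged into one kernel-verified Lean document; each statement's English description precedes it below -/
import Mathlib

section
/- (Lemma 8.1) Let ξ be a standard Gaussian random variable, 0 < γ ≤ 1, C_γ = E|ξ|^γ, D_γ = (Var|ξ|^γ)^{1/2}, and ζ_γ = (|ξ|^γ − C_γ)/D_γ. Then there exists a constant a_γ > 0 such that log E exp(u ζ_γ) ≤ a_γ u² / 2 for every u ∈ ℝ. -/
open MeasureTheory ProbabilityTheory Real

/-- `C_γ = E |ξ|^γ` for a standard Gaussian `ξ`. -/
noncomputable def Cg (γ : ℝ) : ℝ := ∫ x, |x| ^ γ ∂(gaussianReal 0 1)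

/-- `D_γ = (Var |ξ|^γ)^{1/2}` for a standard Gaussian `ξ`. -/
noncomputable def Dg (γ : ℝ) : ℝ :=
  Real.sqrt (∫ x, (|x| ^ γ - Cg γ) ^ 2 ∂(gaussianReal 0 1))

lemma exp_le_add_exp_sq (y : ℝ) : Real.exp y ≤ y + Real.exp (y ^ 2) := by
  have h2 : y ^ 2 + 1 ≤ Real.exp (y ^ 2) := Real.add_one_le_exp _
  rcases le_or_gt |y| 1 with h | h
  · have h1 := (abs_le.1 (Real.abs_exp_sub_one_sub_id_le h)).2
    linarith
  · rcases lt_abs.1 h with h | h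
    · have : Real.exp y ≤ Real.exp (y ^ 2) := Real.exp_le_exp.2 (by nlinarith)
      linarith
    · have : Real.exp y ≤ 1 := Real.exp_le_one_iff.2 (by linarith)
      nlinarith

lemma exp_mul_le_interp (p z : ℝ) (hp : 0 ≤ p) (hp1 : p ≤ 1) :
    Real.exp (p * z) ≤ 1 + p * (Real.exp z - 1) := by
  have h := convexOn_exp.2 (Set.mem_univ (0:ℝ)) (Set.mem_univ z)
    (sub_nonneg.2 hp1) hp (by ring)
  simp only [smul_eq_mul, mul_zero, zero_add, Real.exp_zero] at h
  linarith

lemma mgf_bound (μ : Measure ℝ) [IsProbabilityMeasure μ] (Y : ℝ → ℝ) (hY : Integrable Y μ)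
    (h0 : ∫ x, Y x ∂μ = 0) (s : ℝ) (hs : 0 < s)
    (hi : Integrable (fun x => Real.exp (s * Y x ^ 2)) μ) :
    ∃ K : ℝ, 0 < K ∧ ∀ t : ℝ, ∫ x, Real.exp (t * Y x) ∂μ ≤ Real.exp (K * t ^ 2) := by
  set M := ∫ x, Real.exp (s * Y x ^ 2) ∂μ with hM
  have hM1 : 1 ≤ M := by
    have : ∫ x, (1:ℝ) ∂μ ≤ M :=
      integral_mono (integrable_const _) hi (fun x => Real.one_le_exp (by positivity))
    simpa using this
  have hM2 : 0 ≤ (M - 1) / s := div_nonneg (by linarith) hs.le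
  refine ⟨1 / (4 * s) + (M - 1) / s, by positivity, fun t => ?_⟩
  rcases le_or_gt (t ^ 2) s with ht | ht
  · have hp : t ^ 2 / s ≤ 1 := (div_le_one hs).2 ht
    have hle : ∫ x, Real.exp (t * Y x) ∂μ ≤
        ∫ x, (t * Y x + (1 + t ^ 2 / s * (Real.exp (s * Y x ^ 2) - 1))) ∂μ := by
      apply integral_mono_of_nonneg (Filter.Eventually.of_forall fun x => (Real.exp_pos _).le)
      · exact (hY.const_mul t).add ((integrable_const _).add
          ((hi.sub (integrable_const _)).const_mul _))
      · refine Filter.Eventually.of_forall fun x => ?_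
        have h1 := exp_le_add_exp_sq (t * Y x)
        have h2 := exp_mul_le_interp (t ^ 2 / s) (s * Y x ^ 2) (by positivity) hp
        have h3 : t ^ 2 / s * (s * Y x ^ 2) = (t * Y x) ^ 2 := by field_simp
        rw [h3] at h2
        show Real.exp (t * Y x) ≤ _
        linarith
    have heq : ∫ x, (t * Y x + (1 + t ^ 2 / s * (Real.exp (s * Y x ^ 2) - 1))) ∂μ
        = 1 + t ^ 2 / s * (M - 1) := by
      have i1 : Integrable (fun x => Real.exp (s * Y x ^ 2) - 1) μ := hi.sub (integrable_const _)
      have i2 : Integrable (fun x => t ^ 2 / s * (Real.exp (s * Y x ^ 2) - 1)) μ := i1.const_mul _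
      have i3 : Integrable (fun x => 1 + t ^ 2 / s * (Real.exp (s * Y x ^ 2) - 1)) μ :=
        (integrable_const _).add i2
      rw [integral_add (hY.const_mul t) i3, integral_add (integrable_const _) i2,
        integral_const_mul, integral_const_mul, integral_sub hi (integrable_const _), h0]
      simp [hM]
    rw [heq] at hle
    refine hle.trans ?_
    have h4 := Real.add_one_le_exp (t ^ 2 / s * (M - 1))
    refine (by linarith : _ ≤ _).trans (h4.trans (Real.exp_le_exp.2 ?_))
    have h5 : t ^ 2 / s * (M - 1) = (M - 1) / s * t ^ 2 := by ring
    have h6 : 0 ≤ 1 / (4 * s) * t ^ 2 := by positivity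
    rw [h5, add_mul]; linarith
  · have hle : ∫ x, Real.exp (t * Y x) ∂μ ≤
        ∫ x, Real.exp (1 / (4 * s) * t ^ 2) * Real.exp (s * Y x ^ 2) ∂μ := by
      apply integral_mono_of_nonneg (Filter.Eventually.of_forall fun x => (Real.exp_pos _).le)
      · exact hi.const_mul _
      · refine Filter.Eventually.of_forall fun x => ?_
        show Real.exp (t * Y x) ≤ _
        beta_reduce
        rw [← Real.exp_add]
        apply Real.exp_le_exp.2
        have : 1 / (4 * s) * t ^ 2 + s * Y x ^ 2 - t * Y x = (t - 2 * s * Y x) ^ 2 / (4 * s) := by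
          field_simp; ring
        have : 0 ≤ (t - 2 * s * Y x) ^ 2 / (4 * s) := by positivity
        linarith
    rw [integral_const_mul, ← hM] at hle
    refine hle.trans ?_
    rw [add_mul, Real.exp_add]
    gcongr
    have h4 := Real.add_one_le_exp (M - 1)
    refine (by linarith : _ ≤ _).trans (h4.trans (Real.exp_le_exp.2 ?_))
    rw [div_mul_eq_mul_div, le_div_iff₀ hs]
    exact mul_le_mul_of_nonneg_left ht.le (by linarith)

lemma abs_rpow_le (γ : ℝ) (hγ0 : 0 < γ) (hγ1 : γ ≤ 1) (x : ℝ) : |x| ^ γ ≤ 1 + |x| := by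
  rcases le_or_gt |x| 1 with h | h
  · have := Real.rpow_le_one (abs_nonneg x) h hγ0.le
    linarith [abs_nonneg x]
  · have := Real.rpow_le_rpow_of_exponent_le h.le hγ1
    rw [Real.rpow_one] at this
    linarith

/-- **Lemma 8.1.** Let `ξ` be standard Gaussian, `0 < γ ≤ 1`,
`ζ_γ = (|ξ|^γ − C_γ)/D_γ`.  Then there is `a_γ > 0` with
`log E exp (u ζ_γ) ≤ a_γ u² / 2` for every `u ∈ ℝ`. -/
theorem log_mgf_zeta_gamma_subgaussian (γ : ℝ) (hγ0 : 0 < γ) (hγ1 : γ ≤ 1) :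
    ∃ a : ℝ, 0 < a ∧ ∀ u : ℝ,
      Real.log (∫ x, Real.exp (u * ((|x| ^ γ - Cg γ) / Dg γ)) ∂(gaussianReal 0 1))
        ≤ a * u ^ 2 / 2 := by
  have hmeas : Measurable (fun x : ℝ => |x| ^ γ) := by fun_prop
  have hid : Integrable (fun x : ℝ => x) (gaussianReal 0 1) :=
    (memLp_id_gaussianReal 1).integrable (by simp)
  have hI : Integrable (fun x : ℝ => |x| ^ γ) (gaussianReal 0 1) := by
    refine ((integrable_const (1:ℝ)).add hid.abs).mono' hmeas.aestronglyMeasurable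
      (Filter.Eventually.of_forall fun x => ?_)
    rw [Real.norm_of_nonneg (by positivity)]
    exact abs_rpow_le γ hγ0 hγ1 x
  have hY : Integrable (fun x : ℝ => |x| ^ γ - Cg γ) (gaussianReal 0 1) :=
    hI.sub (integrable_const _)
  have h0 : ∫ x, (|x| ^ γ - Cg γ) ∂(gaussianReal 0 1) = 0 := by
    rw [integral_sub hI (integrable_const _)]
    simp [Cg]
  obtain ⟨c, hc, hci⟩ := IsGaussian.exists_integrable_exp_sq (gaussianReal 0 1)
  have hi : Integrable (fun x : ℝ => Real.exp (c / 2 * (|x| ^ γ - Cg γ) ^ 2))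
      (gaussianReal 0 1) := by
    refine (hci.const_mul (Real.exp (c * (1 + |Cg γ|) ^ 2))).mono'
      (Measurable.aestronglyMeasurable (by fun_prop)) (Filter.Eventually.of_forall fun x => ?_)
    rw [Real.norm_of_nonneg (Real.exp_pos _).le, ← Real.exp_add, Real.norm_eq_abs]
    apply Real.exp_le_exp.2
    have h1 := abs_rpow_le γ hγ0 hγ1 x
    have h2 : 0 ≤ |x| ^ γ := by positivity
    have h3 := neg_abs_le (Cg γ)
    have h4 := le_abs_self (Cg γ)
    have h5 : (|x| ^ γ - Cg γ) ^ 2 ≤ (|x| + (1 + |Cg γ|)) ^ 2 :=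
      sq_le_sq' (by linarith [abs_nonneg x]) (by linarith)
    have h6 : (|x| ^ γ - Cg γ) ^ 2 ≤ 2 * ((1 + |Cg γ|) ^ 2 + |x| ^ 2) := by
      nlinarith [sq_nonneg (|x| - (1 + |Cg γ|))]
    nlinarith
  obtain ⟨K, hK, hb⟩ := mgf_bound _ _ hY h0 (c / 2) (by positivity) hi
  refine ⟨2 * K / Dg γ ^ 2 + 1, by positivity, fun u => ?_⟩
  have h := hb (u / Dg γ)
  have he : ∀ x : ℝ, u * ((|x| ^ γ - Cg γ) / Dg γ) = u / Dg γ * (|x| ^ γ - Cg γ) := by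
    intro x; ring
  simp only [he]
  have h7 : K * (u / Dg γ) ^ 2 ≤ (2 * K / Dg γ ^ 2 + 1) * u ^ 2 / 2 := by
    have : (2 * K / Dg γ ^ 2 + 1) * u ^ 2 / 2 = K * (u / Dg γ) ^ 2 + u ^ 2 / 2 := by ring
    rw [this]; linarith [sq_nonneg u]
  refine le_trans ?_ h7
  rcases (integral_nonneg (μ := gaussianReal 0 1) (f := fun x : ℝ =>
    Real.exp (u / Dg γ * (|x| ^ γ - Cg γ))) fun x => (Real.exp_pos _).le).eq_or_lt with h8 | h8
  · rw [← h8, Real.log_zero]; positivity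
  · exact (Real.log_le_iff_le_exp h8).2 h
end

section
/- (Lemma 8.3) Assume the volatility model and notation given in the context, and let θ̄_I = |I|^{-1} Σ_{t∈I} θ_t. On any event where (Δ_I / v_I) s_γ |I|^{−1/2} < 1 and |θ̃_I − θ̄_I| ≤ λ v_I hold, one has ṽ_I ≥ v_I ( √(1 − (Δ_I/v_I)² s_γ² |I|^{−1}) − s_γ λ |I|^{−1/2} ) ≥ v_I ( 1 − s_γ |I|^{−1/2} (Δ_I/v_I + λ) ). -/
open MeasureTheory ProbabilityTheory Real

/-- `s_γ = D_γ / C_γ`. -/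
noncomputable def sg (γ : ℝ) : ℝ := Dg γ / Cg γ

variable {Ω : Type*}

/-- The target process `θ_t = C_γ σ_t^γ`. -/
noncomputable def theta (γ : ℝ) (σ : ℕ → Ω → ℝ) (t : ℕ) (ω : Ω) : ℝ :=
  Cg γ * σ t ω ^ γ

/-- The local average estimate `θ̃_I = |I|⁻¹ Σ_{t∈I} |R_t|^γ`. -/
noncomputable def thetaTilde (γ : ℝ) (R : ℕ → Ω → ℝ) (I : Finset ℕ) (ω : Ω) : ℝ :=
  (I.card : ℝ)⁻¹ * ∑ t ∈ I, |R t ω| ^ γ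

/-- The local mean `θ̄_I = |I|⁻¹ Σ_{t∈I} θ_t`. -/
noncomputable def thetaBar (γ : ℝ) (σ : ℕ → Ω → ℝ) (I : Finset ℕ) (ω : Ω) : ℝ :=
  (I.card : ℝ)⁻¹ * ∑ t ∈ I, theta γ σ t ω

/-- The departure from homogeneity `Δ_I = sup_{t∈I} |θ_t − θ_τ|`. -/
noncomputable def Delta (γ : ℝ) (σ : ℕ → Ω → ℝ) (τ : ℕ) (I : Finset ℕ) (ω : Ω) : ℝ :=
  ⨆ t : I, |theta γ σ t ω - theta γ σ τ ω|

/-- The conditional standard deviation `v_I = (s_γ² |I|⁻² Σ_{t∈I} θ_t²)^{1/2}`. -/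
noncomputable def vcond (γ : ℝ) (σ : ℕ → Ω → ℝ) (I : Finset ℕ) (ω : Ω) : ℝ :=
  Real.sqrt (sg γ ^ 2 / (I.card : ℝ) ^ 2 * ∑ t ∈ I, theta γ σ t ω ^ 2)

/-- The estimated conditional standard deviation `ṽ_I = s_γ θ̃_I |I|^{-1/2}`. -/
noncomputable def vTilde (γ : ℝ) (R : ℕ → Ω → ℝ) (I : Finset ℕ) (ω : Ω) : ℝ :=
  sg γ * thetaTilde γ R I ω / Real.sqrt (I.card : ℝ)

theorem core_aux (n s v D A T lam : ℝ) (hn : 0 < n) (hs : 0 ≤ s) (hv : 0 ≤ v) (hD : 0 ≤ D)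
    (hA : 0 ≤ A) (hT : 0 ≤ T) (hvar : v ^ 2 - s ^ 2 * D ^ 2 / n ≤ s ^ 2 * A ^ 2 / n)
    (h1 : D / v * s / √n < 1) (h2 : |T - A| ≤ lam * v) :
    v * (√(1 - (D / v) ^ 2 * s ^ 2 / n) - s * lam / √n) ≤ s * T / √n ∧
    v * (1 - s / √n * (D / v + lam)) ≤ v * (√(1 - (D / v) ^ 2 * s ^ 2 / n) - s * lam / √n) := by
  have hq : 0 < √n := Real.sqrt_pos.2 hn
  have hqq : √n ^ 2 = n := Real.sq_sqrt hn.le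
  constructor
  · rcases hv.eq_or_lt with h | hv
    · rw [← h, zero_mul]; positivity
    have e1 : v * √(1 - (D / v) ^ 2 * s ^ 2 / n) ≤ s * A / √n := by
      have : v * √(1 - (D / v) ^ 2 * s ^ 2 / n) = √(v ^ 2 - s ^ 2 * D ^ 2 / n) := by
        rw [show v ^ 2 - s ^ 2 * D ^ 2 / n = v ^ 2 * (1 - (D / v) ^ 2 * s ^ 2 / n) by
          field_simp, Real.sqrt_mul (by positivity), Real.sqrt_sq hv.le]
      rw [this]
      apply Real.sqrt_le_iff.2 ⟨by positivity, ?_⟩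
      rw [div_pow, hqq, mul_pow]; exact hvar
    have e2 : s / √n * (A - lam * v) ≤ s / √n * T := by
      apply mul_le_mul_of_nonneg_left _ (by positivity)
      linarith [neg_abs_le (T - A)]
    have e3 : s / √n * (A - lam * v) = s * A / √n - v * (s * lam / √n) := by ring
    have e4 : s / √n * T = s * T / √n := by ring
    rw [mul_sub]; linarith
  · apply mul_le_mul_of_nonneg_left _ hv
    set x := D / v * s / √n with hx
    have hx0 : 0 ≤ x := by positivity
    have e : (D / v) ^ 2 * s ^ 2 / n = x ^ 2 := by rw [hx, div_pow _ (√n), hqq, mul_pow]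
    have e5 : s / √n * (D / v + lam) = x + s * lam / √n := by rw [hx]; ring
    rw [e, e5]
    have : 1 - x ≤ √(1 - x ^ 2) := Real.le_sqrt_of_sq_le (by nlinarith)
    linarith

theorem Cg_nn (γ : ℝ) : 0 ≤ Cg γ :=
  integral_nonneg fun x => Real.rpow_nonneg (abs_nonneg x) γ

theorem sg_nn (γ : ℝ) : 0 ≤ sg γ := div_nonneg (Real.sqrt_nonneg _) (Cg_nn γ)

theorem var_aux (I : Finset ℕ) (f : ℕ → ℝ) (c D : ℝ) (hI : 0 < (I.card : ℝ))
    (h : ∀ t ∈ I, |f t - c| ≤ D) :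
    (∑ t ∈ I, f t ^ 2) / (I.card : ℝ) - D ^ 2 ≤ ((I.card : ℝ)⁻¹ * ∑ t ∈ I, f t) ^ 2 := by
  have h3 : ∑ t ∈ I, (f t - c) ^ 2 ≤ ∑ t ∈ I, D ^ 2 :=
    Finset.sum_le_sum fun t ht => sq_le_sq' (by linarith [abs_le.1 (h t ht)]) (abs_le.1 (h t ht)).2
  have h4 : ∑ t ∈ I, (f t - c) ^ 2
      = ∑ t ∈ I, f t ^ 2 - 2 * c * ∑ t ∈ I, f t + I.card * c ^ 2 := by
    rw [Finset.mul_sum, ← Finset.sum_sub_distrib, ← nsmul_eq_mul, ← Finset.sum_const,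
      ← Finset.sum_add_distrib]
    exact Finset.sum_congr rfl fun t _ => by ring
  rw [h4, Finset.sum_const, nsmul_eq_mul] at h3
  generalize (I.card : ℝ) = n at *
  generalize ∑ t ∈ I, f t ^ 2 = S at *
  obtain ⟨A, hA⟩ : ∃ A, A = n⁻¹ * ∑ t ∈ I, f t := ⟨_, rfl⟩
  have hA' : ∑ t ∈ I, f t = n * A := by rw [hA]; field_simp
  rw [← hA]
  rw [hA'] at h3
  rw [sub_le_iff_le_add, div_le_iff₀ hI]
  nlinarith [mul_nonneg hI.le (sq_nonneg (A - c))]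

/-- **Lemma 8.3.** Pointwise: if `(Δ_I/v_I) s_γ |I|^{-1/2} < 1` and
`|θ̃_I − θ̄_I| ≤ λ v_I` hold (at a sample point `ω`), then
`ṽ_I ≥ v_I (√(1 − (Δ_I/v_I)² s_γ² |I|⁻¹) − s_γ λ |I|^{-1/2})
     ≥ v_I (1 − s_γ |I|^{-1/2} (Δ_I/v_I + λ))`. -/
theorem vTilde_lower_bound
    (ξ σ : ℕ → Ω → ℝ) (γ : ℝ) (hγ0 : 0 < γ) (hγ1 : γ ≤ 1)
    (hσpos : ∀ t ω, 0 < σ t ω)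
    (lam : ℝ) (hlam : 0 ≤ lam) (τ m : ℕ) (hm : m < τ) (ω : Ω)
    (h1 : (Delta γ σ τ (Finset.Icc (τ - m) τ) ω
            / vcond γ σ (Finset.Icc (τ - m) τ) ω) * sg γ
          / Real.sqrt ((Finset.Icc (τ - m) τ).card : ℝ) < 1)
    (h2 : |thetaTilde γ (fun t ω => σ t ω * ξ t ω) (Finset.Icc (τ - m) τ) ω
            - thetaBar γ σ (Finset.Icc (τ - m) τ) ω|
          ≤ lam * vcond γ σ (Finset.Icc (τ - m) τ) ω) :
    vcond γ σ (Finset.Icc (τ - m) τ) ω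
        * (Real.sqrt (1 - (Delta γ σ τ (Finset.Icc (τ - m) τ) ω
              / vcond γ σ (Finset.Icc (τ - m) τ) ω) ^ 2 * sg γ ^ 2
              / ((Finset.Icc (τ - m) τ).card : ℝ))
            - sg γ * lam / Real.sqrt ((Finset.Icc (τ - m) τ).card : ℝ))
      ≤ vTilde γ (fun t ω => σ t ω * ξ t ω) (Finset.Icc (τ - m) τ) ω ∧
    vcond γ σ (Finset.Icc (τ - m) τ) ω
        * (1 - sg γ / Real.sqrt ((Finset.Icc (τ - m) τ).card : ℝ)
            * (Delta γ σ τ (Finset.Icc (τ - m) τ) ω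
                / vcond γ σ (Finset.Icc (τ - m) τ) ω + lam))
      ≤ vcond γ σ (Finset.Icc (τ - m) τ) ω
        * (Real.sqrt (1 - (Delta γ σ τ (Finset.Icc (τ - m) τ) ω
              / vcond γ σ (Finset.Icc (τ - m) τ) ω) ^ 2 * sg γ ^ 2
              / ((Finset.Icc (τ - m) τ).card : ℝ))
            - sg γ * lam / Real.sqrt ((Finset.Icc (τ - m) τ).card : ℝ)) := by
  set I := Finset.Icc (τ - m) τ with hI
  have hn : 0 < (I.card : ℝ) := by
    have : I.Nonempty := ⟨τ, by simp [hI]⟩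
    exact_mod_cast this.card_pos
  have hb : ∀ t ∈ I, |theta γ σ t ω - theta γ σ τ ω| ≤ Delta γ σ τ I ω := fun t ht =>
    le_ciSup (f := fun t : I => |theta γ σ t ω - theta γ σ τ ω|)
      (Set.finite_range _).bddAbove ⟨t, ht⟩
  have hvar := var_aux I (fun t => theta γ σ t ω) _ _ hn hb
  have hS : 0 ≤ ∑ t ∈ I, theta γ σ t ω ^ 2 := Finset.sum_nonneg fun _ _ => sq_nonneg _
  have hv2 : vcond γ σ I ω ^ 2 = sg γ ^ 2 / (I.card : ℝ) ^ 2 * ∑ t ∈ I, theta γ σ t ω ^ 2 :=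
    Real.sq_sqrt (by positivity)
  refine core_aux _ _ _ _ (thetaBar γ σ I ω) _ lam hn (sg_nn γ) (Real.sqrt_nonneg _)
    (Real.iSup_nonneg fun _ => abs_nonneg _) ?_ ?_ ?_ h1 h2
  · exact mul_nonneg (by positivity) (Finset.sum_nonneg fun t _ =>
      mul_nonneg (Cg_nn γ) (Real.rpow_nonneg (hσpos t ω).le _))
  · exact mul_nonneg (by positivity) (Finset.sum_nonneg fun t _ =>
      Real.rpow_nonneg (abs_nonneg _) _)
  · rw [hv2]
    have := mul_le_mul_of_nonneg_left hvar (show 0 ≤ sg γ ^ 2 / (I.card : ℝ) by positivity)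
    unfold thetaBar
    calc _ = sg γ ^ 2 / (I.card : ℝ) * ((∑ t ∈ I, theta γ σ t ω ^ 2) / (I.card : ℝ)
            - Delta γ σ τ I ω ^ 2) := by ring
      _ ≤ _ := this
      _ = _ := by ring
end
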